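/- Let d ≥ 2 and 0 < r < r'. Then K_r is contained in the interior of K_{r'}^co; that is, for every v ∈ ℝ^d with |v|² = r, the pair (v, v⊗v − (r/d)·I_d) lies in the interior of the convex hull of K_{r'} in ℝ^d × S₀^{d×d}. -/

import Mathlib

open MeasureTheory

noncomputable section

/-- Vectors in ℝ^d. -/
abbrev Vec (d : ℕ) := Fin d → ℝ

/-- Matrices (as functions). -/
abbrev Mat (d : ℕ) := Fin d → Fin d → ℝ

/-- The space S₀^{d×d} of symmetric trace-free d×d matrices, as a submodule. -/
def S0 (d : ℕ) : Submodule ℝ (Mat d) where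
  carrier := {U | (∀ i j, U i j = U j i) ∧ ∑ i, U i i = 0}
  add_mem' := by
    rintro U V ⟨hU1, hU2⟩ ⟨hV1, hV2⟩
    refine ⟨fun i j => by simp [hU1 i j, hV1 i j], ?_⟩
    simp [Finset.sum_add_distrib, hU2, hV2]
  zero_mem' := ⟨fun i j => rfl, by simp⟩
  smul_mem' := by
    rintro c U ⟨hU1, hU2⟩
    refine ⟨fun i j => by simp [hU1 i j], ?_⟩
    simp [← Finset.mul_sum, hU2]

/-- Partial derivative ∂ᵢ of a scalar function. -/
def pd {d : ℕ} (i : Fin d) (f : Vec d → ℝ) (x : Vec d) : ℝ :=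
  fderiv ℝ f x (Pi.single i 1)

/-- The wave cone Λ: states `(v̄, Ū)` with `v̄ ≠ 0` for which there are `q̄ ∈ ℝ` and
`ξ ≠ 0` with `Ū ξ + q̄ ξ = 0` and `v̄ · ξ = 0`. -/
def Lam (d : ℕ) : Set (Vec d × S0 d) :=
  {w | w.1 ≠ 0 ∧ ∃ (q : ℝ) (ξ : Vec d), ξ ≠ 0 ∧
    (∀ i, (∑ j, (w.2 : Mat d) i j * ξ j) + q * ξ i = 0) ∧ (∑ i, w.1 i * ξ i = 0)}

/-- The constraint set `K_r = {(v, U) : U = v ⊗ v − (r/d)·I_d}` inside ℝ^d × S₀^{d×d}.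
(Note that trace-freeness of `U` forces `|v|² = r` on `K_r`.) -/
def Kset (d : ℕ) (r : ℝ) : Set (Vec d × S0 d) :=
  {w | ∀ i j, (w.2 : Mat d) i j = w.1 i * w.1 j - (r / d) * (if i = j then 1 else 0)}

/-!
For a state `w = (v, U)` consider the matrix `(R/d) I + U - v ⊗ v`, whose trace is `R - |v|²` and
which vanishes exactly on `K_R`. If it is a rank-one matrix `a ⊗ a`, then the line `v + ℝ a` meets
the sphere `|·|² = R` at points `v + t a` and `v - t⁻¹ a`, and `w` is a convex combination of the
two points of `K_R` above these. A positive semidefinite matrix is a convex combination of rank-one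
matrices of the same trace, and over a fixed `v` the matrix is affine in `U`, so positive
semidefiniteness already puts `w` in the convex hull of `K_R`. As positive definiteness is an open
condition on Hermitian matrices, it puts `w` in the interior. On `K_r` the matrix formed with
`R = r'` is `((r' - r)/d) I`.
-/

open Matrix Topology

section Chord

variable {ι : Type*} [Fintype ι]

theorem exists_chord_dotProduct_self_eq (v a : ι → ℝ) :
    ∃ t : ℝ, t ≠ 0 ∧
      (v + t • a) ⬝ᵥ (v + t • a) = v ⬝ᵥ v + a ⬝ᵥ a ∧
      (v - t⁻¹ • a) ⬝ᵥ (v - t⁻¹ • a) = v ⬝ᵥ v + a ⬝ᵥ a := by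
  obtain rfl | ha := eq_or_ne a 0
  · exact ⟨1, one_ne_zero, by simp, by simp⟩
  have ha' : a ⬝ᵥ a ≠ 0 := dotProduct_self_eq_zero.not.mpr ha
  have hdiscrim : 0 ≤ discrim (a ⬝ᵥ a) (2 * (v ⬝ᵥ a)) (-(a ⬝ᵥ a)) := by
    unfold discrim
    nlinarith [sq_nonneg (v ⬝ᵥ a), sq_nonneg (a ⬝ᵥ a)]
  obtain ⟨t, ht⟩ := exists_quadratic_eq_zero ha'
    ⟨_, (Real.mul_self_sqrt hdiscrim).symm⟩
  have ht0 : t ≠ 0 := by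
    rintro rfl
    simp [ha'] at ht
  -- By Vieta, the other root of `(a ⬝ᵥ a) t² + 2 (v ⬝ᵥ a) t - a ⬝ᵥ a` is `-t⁻¹`.
  refine ⟨t, ht0, ?_, ?_⟩
  · simp only [add_dotProduct, dotProduct_add, smul_dotProduct, dotProduct_smul, smul_eq_mul,
      dotProduct_comm a v]
    linarith
  · simp only [sub_dotProduct, dotProduct_sub, smul_dotProduct, dotProduct_smul, smul_eq_mul,
      dotProduct_comm a v]
    field_simp
    linarith

end Chord

section PosDef

open scoped ComplexOrder

variable {𝕜 n : Type*} [RCLike 𝕜]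

theorem eventually_posDef_of_isHermitian [Finite n] {M : Matrix n n 𝕜} (hM : M.PosDef) :
    ∀ᶠ A in 𝓝 M, A.IsHermitian → A.PosDef := by
  cases nonempty_fintype n
  have hsphere : ∀ᶠ A in 𝓝 M, ∀ x ∈ Metric.sphere (0 : n → 𝕜) 1,
      0 < RCLike.re (star x ⬝ᵥ A *ᵥ x) := by
    refine (isCompact_sphere 0 1).eventually_forall_of_forall_eventually fun x hx => ?_
    have hcont : Continuous fun p : Matrix n n 𝕜 × (n → 𝕜) =>
        RCLike.re (star p.2 ⬝ᵥ p.1 *ᵥ p.2) := by fun_prop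
    exact hcont.continuousAt.eventually_const_lt
      (hM.re_dotProduct_pos (ne_zero_of_mem_unit_sphere ⟨x, hx⟩))
  filter_upwards [hsphere] with A hA hAH
  refine .of_dotProduct_mulVec_pos hAH fun x hx =>
    RCLike.pos_iff.mpr ⟨?_, hAH.im_star_dotProduct_mulVec_self x⟩
  have hy := hA (‖x‖⁻¹ • x) (by simp [norm_smul, hx])
  rw [star_smul, smul_dotProduct, mulVec_smul, dotProduct_smul, star_trivial, smul_smul,
    RCLike.smul_re] at hy
  exact pos_of_mul_pos_right hy (by positivity)

theorem smul_vecMulVec_star_self {c : ℝ} (hc : 0 ≤ c) (a : n → 𝕜) :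
    c • vecMulVec a (star a) = vecMulVec (√c • a) (star (√c • a)) := by
  rw [star_smul, smul_vecMulVec, vecMulVec_smul, smul_smul, star_trivial √c, Real.mul_self_sqrt hc]

variable [Fintype n]

theorem trace_vecMulVec_star_self (a : n → 𝕜) :
    (vecMulVec a (star a)).trace = ((∑ i, ‖a i‖ ^ 2 : ℝ) : 𝕜) := by
  simp [trace_vecMulVec, dotProduct, RCLike.mul_conj]

theorem mem_convexHull_vecMulVec_of_posSemidef {M : Matrix n n 𝕜} (hM : M.PosSemidef) :
    M ∈ convexHull ℝ {A | A.trace = M.trace ∧ ∃ a : n → 𝕜, A = vecMulVec a (star a)} := by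
  obtain rfl | hM0 := eq_or_ne M 0
  · exact subset_convexHull ℝ _ ⟨rfl, 0, by simp⟩
  obtain ⟨m, a, hMa⟩ := posSemidef_iff_eq_sum_vecMulVec.mp hM
  set s : Fin m → ℝ := fun k => ∑ i, ‖a k i‖ ^ 2
  have hs0 (k : Fin m) : 0 ≤ s k := by positivity
  have hsa (k : Fin m) : (vecMulVec (a k) (star (a k))).trace = (s k : 𝕜) :=
    trace_vecMulVec_star_self (a k)
  have htrace : M.trace = ((∑ k, s k : ℝ) : 𝕜) := by
    simp_rw [hMa, trace_sum, hsa, RCLike.ofReal_sum]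
  set τ : ℝ := ∑ k, s k
  have hτ : τ ≠ 0 := fun h => hM0 <| by
    rw [← hM.trace_eq_zero_iff, htrace, h, RCLike.ofReal_zero]
  have hτ0 : 0 ≤ τ := Finset.sum_nonneg fun k _ => hs0 k
  have hdecomp : M = ∑ k with s k ≠ 0, (s k / τ) • (τ / s k) • vecMulVec (a k) (star (a k)) := by
    rw [hMa, ← Finset.sum_filter_of_ne (p := fun k => s k ≠ 0)]
    · refine Finset.sum_congr rfl fun k hk => ?_
      rw [smul_smul, div_mul_div_cancel₀ hτ, div_self (Finset.mem_filter.mp hk).2, one_smul]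
    · intro k _ hk hsk
      apply hk
      rw [← (posSemidef_vecMulVec_self_star (a k)).trace_eq_zero_iff, hsa, hsk, RCLike.ofReal_zero]
  rw [hdecomp]
  refine (convex_convexHull ℝ _).sum_mem (fun k _ => div_nonneg (hs0 k) hτ0) ?_ fun k hk => ?_
  · rw [← Finset.sum_div, Finset.sum_filter_ne_zero, div_self hτ]
  · have hsk : s k ≠ 0 := (Finset.mem_filter.mp hk).2
    refine subset_convexHull ℝ _ ⟨?_, _, smul_vecMulVec_star_self (div_nonneg hτ0 (hs0 k)) (a k)⟩
    rw [← hdecomp, trace_smul, hsa, htrace, RCLike.real_smul_eq_coe_mul, ← RCLike.ofReal_mul,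
      div_mul_cancel₀ _ hsk]

end PosDef

section ReynoldsStress

variable {d : ℕ} {R : ℝ}

/-- The matrix `(R/d) I + U - v ⊗ v` at `w = (v, U)`, which measures how far `w` is from the
constraint set `K_R`. For a subsolution of the Euler equations it is the Reynolds stress. -/
def reynoldsStress (R : ℝ) (w : Vec d × S0 d) : Matrix (Fin d) (Fin d) ℝ :=
  (R / d) • 1 + of (w.2 : Mat d) - vecMulVec w.1 w.1

theorem mem_Kset_iff {w : Vec d × S0 d} : w ∈ Kset d R ↔ reynoldsStress R w = 0 := by
  rw [← Matrix.ext_iff]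
  refine forall₂_congr fun i j => ?_
  simp only [reynoldsStress, Matrix.sub_apply, Matrix.add_apply, Matrix.smul_apply, one_apply,
    of_apply, vecMulVec_apply, smul_eq_mul, Matrix.zero_apply]
  rw [sub_eq_zero, eq_sub_iff_add_eq']

theorem reynoldsStress_eq_add (r r' : ℝ) (w : Vec d × S0 d) :
    reynoldsStress r' w = reynoldsStress r w + ((r' - r) / d) • 1 := by
  simp only [reynoldsStress, sub_div, sub_smul]
  abel

theorem isHermitian_reynoldsStress (w : Vec d × S0 d) : (reynoldsStress R w).IsHermitian := by
  ext i j
  simp [reynoldsStress, vecMulVec_apply, one_apply, w.2.2.1 i j, mul_comm (w.1 i),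
    eq_comm (a := i)]

theorem trace_reynoldsStress (hd : d ≠ 0) (w : Vec d × S0 d) :
    (reynoldsStress R w).trace = R - w.1 ⬝ᵥ w.1 := by
  have hU : (of (w.2 : Mat d)).trace = 0 := w.2.2.2
  simp [reynoldsStress, trace_vecMulVec, hU, hd]

theorem continuous_reynoldsStress : Continuous (reynoldsStress (d := d) R) := by
  have hU : Continuous fun w : Vec d × S0 d => (w.2 : Mat d) :=
    continuous_subtype_val.comp continuous_snd
  exact (continuous_const.add hU).sub (continuous_fst.matrix_vecMulVec continuous_fst)

theorem eq_of_reynoldsStress_eq {w z : Vec d × S0 d} (hfst : w.1 = z.1)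
    (hstress : reynoldsStress R w = reynoldsStress R z) : w = z := by
  refine Prod.ext hfst (Subtype.ext ?_)
  simpa [reynoldsStress, hfst] using hstress

theorem exists_reynoldsStress_eq (hd : d ≠ 0) {v : Vec d} {M : Matrix (Fin d) (Fin d) ℝ}
    (hM : M.IsHermitian) (htrace : M.trace = R - v ⬝ᵥ v) :
    ∃ w : Vec d × S0 d, w.1 = v ∧ reynoldsStress R w = M := by
  let U : Matrix (Fin d) (Fin d) ℝ := M + vecMulVec v v - (R / d) • 1
  have hsymm (i j : Fin d) : U i j = U j i := by
    have hMij : M i j = M j i := by simpa using hM.apply j i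
    simp [U, vecMulVec_apply, one_apply, hMij, mul_comm (v i), eq_comm (a := i)]
  have hU : U.trace = 0 := by
    simp [U, trace_vecMulVec, htrace, hd]
  exact ⟨(v, ⟨U, hsymm, hU⟩), rfl, show (R / d) • 1 + U - vecMulVec v v = M by simp only [U]; abel⟩

theorem reynoldsStress_smul_add_smul (p q : Vec d × S0 d) {α β : ℝ} (hαβ : α + β = 1) :
    reynoldsStress R (α • p + β • q) =
      α • reynoldsStress R p + β • reynoldsStress R q +
        (α * β) • vecMulVec (p.1 - q.1) (p.1 - q.1) := by
  obtain rfl : β = 1 - α := by linarith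
  ext i j
  simp only [reynoldsStress, Prod.fst_add, Prod.snd_add, Prod.smul_fst, Prod.smul_snd,
    Submodule.coe_add, Submodule.coe_smul, Matrix.sub_apply, Matrix.add_apply, Matrix.smul_apply,
    of_apply, vecMulVec_apply, Pi.add_apply, Pi.sub_apply, Pi.smul_apply, smul_eq_mul]
  ring

theorem convex_image_reynoldsStress {C : Set (Vec d × S0 d)} (hC : Convex ℝ C) (v : Vec d) :
    Convex ℝ (reynoldsStress R '' {p ∈ C | p.1 = v}) := by
  rintro _ ⟨p, ⟨hp, hpv⟩, rfl⟩ _ ⟨q, ⟨hq, hqv⟩, rfl⟩ α β hα hβ hαβ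
  refine ⟨α • p + β • q, ⟨hC hp hq hα hβ hαβ, ?_⟩, ?_⟩
  · simp [hpv, hqv, ← add_smul, hαβ]
  · simp [reynoldsStress_smul_add_smul p q hαβ, hpv, hqv]

theorem exists_mem_Kset_fst_eq (hd : d ≠ 0) {v : Vec d} (hv : v ⬝ᵥ v = R) :
    ∃ p ∈ Kset d R, p.1 = v := by
  obtain ⟨p, hpv, hp⟩ := exists_reynoldsStress_eq hd isHermitian_zero
    (show (0 : Matrix (Fin d) (Fin d) ℝ).trace = R - v ⬝ᵥ v by rw [hv, sub_self, trace_zero])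
  exact ⟨p, mem_Kset_iff.mpr hp, hpv⟩

theorem mem_convexHull_Kset_of_reynoldsStress_eq_vecMulVec (hd : d ≠ 0) {w : Vec d × S0 d}
    {a : Vec d} (hw : reynoldsStress R w = vecMulVec a a) : w ∈ convexHull ℝ (Kset d R) := by
  have hR : w.1 ⬝ᵥ w.1 + a ⬝ᵥ a = R := by
    rw [← trace_vecMulVec a a, ← hw, trace_reynoldsStress hd, add_sub_cancel]
  obtain ⟨t, ht, hplus, hminus⟩ := exists_chord_dotProduct_self_eq w.1 a
  obtain ⟨p, hp, hpv⟩ := exists_mem_Kset_fst_eq hd (hplus.trans hR)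
  obtain ⟨q, hq, hqv⟩ := exists_mem_Kset_fst_eq hd (hminus.trans hR)
  have hweights : 1 / (1 + t ^ 2) + t ^ 2 / (1 + t ^ 2) = 1 := by
    field_simp
  have hdiff : p.1 - q.1 = (t + t⁻¹) • a := by
    rw [hpv, hqv]
    module
  have hcoeff : 1 / (1 + t ^ 2) * (t ^ 2 / (1 + t ^ 2)) * (t + t⁻¹) * (t + t⁻¹) = 1 := by
    field_simp
    ring
  have hcomb : (1 / (1 + t ^ 2)) • p + (t ^ 2 / (1 + t ^ 2)) • q = w := by
    apply eq_of_reynoldsStress_eq (R := R)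
    · rw [Prod.fst_add, Prod.smul_fst, Prod.smul_fst, hpv, hqv]
      match_scalars <;> field_simp
      ring
    · rw [reynoldsStress_smul_add_smul p q hweights, mem_Kset_iff.mp hp, mem_Kset_iff.mp hq, hdiff,
        smul_vecMulVec, vecMulVec_smul, smul_smul, smul_smul, hcoeff, hw]
      simp only [smul_zero, zero_add, one_smul]
  rw [← hcomb]
  exact convex_convexHull ℝ _ (subset_convexHull ℝ _ hp) (subset_convexHull ℝ _ hq)
    (by positivity) (by positivity) hweights

theorem mem_convexHull_Kset_of_posSemidef (hd : d ≠ 0) {w : Vec d × S0 d}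
    (hw : (reynoldsStress R w).PosSemidef) : w ∈ convexHull ℝ (Kset d R) := by
  suffices h : reynoldsStress R w ∈
      reynoldsStress R '' {p ∈ convexHull ℝ (Kset d R) | p.1 = w.1} by
    obtain ⟨p, ⟨hp, hpw⟩, hstress⟩ := h
    rwa [← eq_of_reynoldsStress_eq hpw hstress]
  refine convexHull_min ?_ (convex_image_reynoldsStress (convex_convexHull ℝ _) w.1)
    (mem_convexHull_vecMulVec_of_posSemidef hw)
  rintro _ ⟨htrace, a, rfl⟩
  obtain ⟨p, hpw, hp⟩ := exists_reynoldsStress_eq hd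
    (posSemidef_vecMulVec_self_star a).isHermitian (htrace.trans (trace_reynoldsStress hd w))
  exact ⟨p, ⟨mem_convexHull_Kset_of_reynoldsStress_eq_vecMulVec hd hp, hpw⟩, hp⟩

theorem mem_interior_convexHull_Kset_of_posDef (hd : d ≠ 0) {w : Vec d × S0 d}
    (hw : (reynoldsStress R w).PosDef) : w ∈ interior (convexHull ℝ (Kset d R)) := by
  rw [mem_interior_iff_mem_nhds]
  filter_upwards [continuous_reynoldsStress.continuousAt.eventually
    (eventually_posDef_of_isHermitian hw)] with z hz
  exact mem_convexHull_Kset_of_posSemidef hd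
    (hz (isHermitian_reynoldsStress z)).posSemidef

end ReynoldsStress

/-- Let `d ≥ 2`, `0 < r < r'`. Then `K_r` is contained in the interior of
`K_{r'}^co`: for every `v` with `|v|² = r`, the pair `(v, v⊗v − (r/d)·I_d)` lies in the
interior of the convex hull of `K_{r'}` in ℝ^d × S₀^{d×d}. -/
theorem stmt9 (d : ℕ) (hd : 2 ≤ d) (r r' : ℝ) (hr : 0 < r) (hrr' : r < r') :
    Kset d r ⊆ interior (convexHull ℝ (Kset d r')) := by
  intro w hw
  have hstress : reynoldsStress r' w = ((r' - r) / d) • 1 := by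
    rw [reynoldsStress_eq_add r r', mem_Kset_iff.mp hw, zero_add]
  have hpos : 0 < (r' - r) / d := div_pos (sub_pos.mpr hrr') (by positivity)
  refine mem_interior_convexHull_Kset_of_posDef (by omega) ?_
  rw [hstress]
  exact PosDef.one.smul hpos
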